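/- Let n ≥ 1, let k ∈ ℝⁿ be nonzero, let c1 > 0, c2 ≥ 0, ψ_ρ, ψ_u ∈ ℝ, and let c4, c5 ∈ ℂ with c4·c5 = c3 for some real c3 > 0. Then the characteristic polynomial of the (n+1)×(n+1) complex matrix N̄_k (defined in the context) factors as det(X·I − N̄_k) = (X + c1|k|²)^{n−1} · (X² + ((c1+c2)|k|² + ψ_ρ)·X + ((c1+c2)|k|²·ψ_ρ + c3(1+ψ_u)|k|²)). -/

import Mathlib

open Polynomial Matrix

/-!
The characteristic polynomial is computed by evaluating it at every `t ≠ -ψρ`, which determines a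
polynomial over `ℂ`. For such `t` the upper-left entry `a = t + ψρ` of `t - N̄_k` is invertible.
The off-diagonal blocks are multiples of `kᵀ` and `k`, so eliminating that entry only changes the
coefficient of `k ⊗ k` in the lower-right block. The determinant is thus reduced to that of a
scalar matrix plus a rank-one matrix (`det_bordered_rankOne`, `det_smul_one_add_vecMulVec`).
-/

/-- The rank-one determinant formula at a scalar `d`, which may be zero. -/
theorem det_smul_one_add_vecMulVec {n : ℕ} (hn : 1 ≤ n) (v : Fin n → ℂ) (d s : ℂ) :
    (d • (1 : Matrix (Fin n) (Fin n) ℂ) + s • vecMulVec v v).det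
      = d ^ (n - 1) * (d + s * (v ⬝ᵥ v)) := by
  obtain ⟨m, rfl⟩ : ∃ m, n = m + 1 := ⟨n - 1, by omega⟩
  have h := congrArg (eval d) (charpoly_vecMulVec ((-s) • v) v)
  rw [eval_charpoly, smul_vecMulVec, neg_smul, sub_neg_eq_add, scalar_apply,
    ← smul_one_eq_diagonal] at h
  rw [h]
  simp
  ring

/-- A scalar-plus-rank-one block bordered by multiples of the same vector, with nonzero corner:
the Schur complement of the corner is again scalar plus rank one. -/
theorem det_bordered_rankOne {n : ℕ} (hn : 1 ≤ n) (v : Fin n → ℂ) (a p q d e : ℂ) (ha : a ≠ 0) :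
    (fromBlocks
        (of fun (_ : Unit) (_ : Unit) => a)
        (of fun (_ : Unit) (j : Fin n) => p * v j)
        (of fun (i : Fin n) (_ : Unit) => q * v i)
        (d • (1 : Matrix (Fin n) (Fin n) ℂ) + e • vecMulVec v v)).det
      = d ^ (n - 1) * (a * d + (a * e - p * q) * (v ⬝ᵥ v)) := by
  let A : Matrix Unit Unit ℂ := of fun _ _ => a
  let _ : Invertible A :=
    { invOf := of fun _ _ => a⁻¹
      invOf_mul_self := by ext i j; simp [A, mul_apply, ha]
      mul_invOf_self := by ext i j; simp [A, mul_apply, ha] }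
  have hinv : (⅟A : Matrix Unit Unit ℂ) = of fun _ _ => a⁻¹ := rfl
  change (fromBlocks A _ _ _).det = _
  have hS : d • (1 : Matrix (Fin n) (Fin n) ℂ) + e • vecMulVec v v
      - (of fun (i : Fin n) (_ : Unit) => q * v i) * ⅟A
        * (of fun (_ : Unit) (j : Fin n) => p * v j)
      = d • (1 : Matrix (Fin n) (Fin n) ℂ) + (e - p * q / a) • vecMulVec v v := by
    rw [hinv]
    ext i j
    simp [mul_apply, vecMulVec_apply]
    ring
  rw [det_fromBlocks₁₁, hS, det_smul_one_add_vecMulVec hn]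
  simp only [A, det_unique, of_apply]
  field_simp

/-- The characteristic polynomial of the density-observation mode
matrix `N̄_k` factors as `(X + c1|k|²)^(n-1)
  * (X² + ((c1+c2)|k|² + ψρ)X + ((c1+c2)|k|²ψρ + c3(1+ψu)|k|²))`. -/
theorem charpoly_Nbar (n : ℕ) (hn : 1 ≤ n) (k : Fin n → ℝ) (hk : k ≠ 0)
    (c1 c2 c3 ψρ ψu : ℝ) (hc1 : 0 < c1) (hc2 : 0 ≤ c2) (hc3 : 0 < c3)
    (c4 c5 : ℂ) (hc45 : c4 * c5 = (c3 : ℂ)) :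
    (Matrix.fromBlocks
        (Matrix.of fun (_ : Unit) (_ : Unit) => (-(ψρ : ℂ)))
        (Matrix.of fun (_ : Unit) (j : Fin n) => c4 * (k j : ℂ))
        (Matrix.of fun (i : Fin n) (_ : Unit) => -c5 * (1 + (ψu : ℂ)) * (k i : ℂ))
        ((-((c1 * (∑ j, k j ^ 2) : ℝ) : ℂ)) • (1 : Matrix (Fin n) (Fin n) ℂ)
          - ((c2 : ℝ) : ℂ) • Matrix.vecMulVec (fun j => ((k j : ℝ) : ℂ))
              (fun j => ((k j : ℝ) : ℂ)))).charpoly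
      = (X + C ((c1 * (∑ j, k j ^ 2) : ℝ) : ℂ)) ^ (n - 1)
        * (X ^ 2 + C ((((c1 + c2) * (∑ j, k j ^ 2) + ψρ) : ℝ) : ℂ) * X
            + C ((((c1 + c2) * (∑ j, k j ^ 2) * ψρ
                + c3 * (1 + ψu) * (∑ j, k j ^ 2)) : ℝ) : ℂ)) := by
  refine eq_of_infinite_eval_eq _ _ (Set.Infinite.mono (s := {-(ψρ : ℂ)}ᶜ) ?_
    (Set.finite_singleton _).infinite_compl)
  intro t ht
  have ha : t + (ψρ : ℂ) ≠ 0 := fun h => ht (eq_neg_of_add_eq_zero_left h)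
  have hM : ∀ S : ℂ, scalar (Unit ⊕ Fin n) t - fromBlocks
        (of fun (_ : Unit) (_ : Unit) => (-(ψρ : ℂ)))
        (of fun (_ : Unit) (j : Fin n) => c4 * (k j : ℂ))
        (of fun (i : Fin n) (_ : Unit) => -c5 * (1 + (ψu : ℂ)) * (k i : ℂ))
        ((-S) • (1 : Matrix (Fin n) (Fin n) ℂ)
          - (c2 : ℂ) • vecMulVec (fun j => (k j : ℂ)) (fun j => (k j : ℂ)))
      = fromBlocks
        (of fun (_ : Unit) (_ : Unit) => t + (ψρ : ℂ))
        (of fun (_ : Unit) (j : Fin n) => -c4 * (k j : ℂ))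
        (of fun (i : Fin n) (_ : Unit) => c5 * (1 + (ψu : ℂ)) * (k i : ℂ))
        ((t + S) • (1 : Matrix (Fin n) (Fin n) ℂ)
          + (c2 : ℂ) • vecMulVec (fun j => (k j : ℂ)) (fun j => (k j : ℂ))) := by
    intro S
    ext (i | i) (j | j)
    · simp
    · simp
    · simp
    · simp [diagonal_apply, one_apply]
      split_ifs <;> ring
  have hdot : (fun j => (k j : ℂ)) ⬝ᵥ (fun j => (k j : ℂ)) = ((∑ j, k j ^ 2 : ℝ) : ℂ) := by
    simp [dotProduct, sq]
  change eval t _ = eval t _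
  rw [eval_charpoly, hM,
    det_bordered_rankOne hn (fun j => (k j : ℂ)) _ _ _ _ _ ha, hdot]
  generalize (∑ j, k j ^ 2) = S
  simp only [eval_mul, eval_add, eval_pow, eval_X, eval_C]
  push_cast
  rw [← hc45]
  ring
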